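/- Let k ≥ 3 be an integer. For all sufficiently large n, if G is an n-vertex W_{2k+1}-free simple graph attaining the maximum spectral radius among all n-vertex W_{2k+1}-free graphs and V(G) = S ⊔ T is a maximum cut of G, then every vertex u ∈ S with d_S(u) = d is adjacent to all but at most d vertices of T (i.e. d_T(u) ≥ |T| − d), and symmetrically every vertex u ∈ T with d_T(u) = d is adjacent to all but at most d vertices of S. -/

import Mathlib

/-- The wheel graph on `t` vertices: vertex `0` joined to every vertex of the
cycle `1, 2, …, t-1` (with `t-1` adjacent to `1`). -/
def wheelGraph (t : ℕ) : SimpleGraph (Fin t) where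
  Adj a b := a ≠ b ∧ (a.val = 0 ∨ b.val = 0 ∨ a.val + 1 = b.val ∨ b.val + 1 = a.val ∨
      (a.val = 1 ∧ b.val = t - 1) ∨ (b.val = 1 ∧ a.val = t - 1))
  symm := by
    constructor
    intro a b h
    exact ⟨h.1.symm, by tauto⟩
  loopless := by
    constructor
    intro a h
    exact h.1 rfl

/-- `G` contains a copy of `F`, i.e. a subgraph isomorphic to `F`. -/
def ContainsCopy {α β : Type*} (F : SimpleGraph α) (G : SimpleGraph β) : Prop :=
  ∃ f : α ↪ β, ∀ a b, F.Adj a b → G.Adj (f a) (f b)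

/-- `G` is `W_t`-free: it contains no subgraph isomorphic to the wheel on `t` vertices. -/
def WheelFree (t : ℕ) {n : ℕ} (G : SimpleGraph (Fin n)) : Prop :=
  ¬ ContainsCopy (wheelGraph t) G

/-- The spectral radius of `G`: the largest eigenvalue of its adjacency matrix. -/
noncomputable def lam1 {n : ℕ} (G : SimpleGraph (Fin n)) : ℝ := by
  classical
  exact sSup {μ : ℝ | Module.End.HasEigenvalue (Matrix.toLin' (G.adjMatrix ℝ)) μ}

/-- The number of edges of a graph on a finite vertex type. -/
noncomputable def edgeCount {V : Type*} [Fintype V] (G : SimpleGraph V) : ℕ := by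
  classical
  exact G.edgeFinset.card

/-- The degree of a vertex. -/
noncomputable def deg {n : ℕ} (G : SimpleGraph (Fin n)) (v : Fin n) : ℕ := by
  classical
  exact G.degree v

/-- The number of neighbours of `v` inside the set `A`. -/
noncomputable def degIn {n : ℕ} (G : SimpleGraph (Fin n)) (A : Finset (Fin n)) (v : Fin n) : ℕ := by
  classical
  exact (A.filter fun u => G.Adj v u).card

/-- The number of edges of `G` with one endpoint in `S` and the other outside `S`. -/
noncomputable def cutCount {n : ℕ} (G : SimpleGraph (Fin n)) (S : Finset (Fin n)) : ℕ := by
  classical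
  exact ((Finset.univ : Finset (Fin n × Fin n)).filter
    fun p => G.Adj p.1 p.2 ∧ p.1 ∈ S ∧ p.2 ∉ S).card

/-- `(S, T)` is a maximum cut of `G`. -/
def IsMaxCut {n : ℕ} (G : SimpleGraph (Fin n)) (S T : Finset (Fin n)) : Prop :=
  T = Sᶜ ∧ ∀ S' : Finset (Fin n), cutCount G S' ≤ cutCount G S

/-- `G` attains the maximum spectral radius among all `n`-vertex `W_t`-free graphs. -/
def IsSpexWheel (t : ℕ) {n : ℕ} (G : SimpleGraph (Fin n)) : Prop :=
  WheelFree t G ∧ ∀ H : SimpleGraph (Fin n), WheelFree t H → lam1 H ≤ lam1 G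

/-- `G` attains the maximum number of edges among all `n`-vertex `W_t`-free graphs. -/
def IsExWheel (t : ℕ) {n : ℕ} (G : SimpleGraph (Fin n)) : Prop :=
  WheelFree t G ∧ ∀ H : SimpleGraph (Fin n), WheelFree t H → edgeCount H ≤ edgeCount G

/-!
Let `x` be the Perron vector of the extremal graph `G`, with maximum entry `x u = 1`. A wheel
contains a triangle, so `λ` is at least the spectral radius of the balanced complete bipartite
graph, about `n / 2`, while the neighbourhoods of `G` contain no `K_{k,k}` and so span `o(n²)`
edges. Counting the walks of length two from `u` then shows that the cut `(N(u), N(u)ᶜ)` misses only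
`o(n²)` edges of a balanced complete bipartite graph, and hence that a maximum cut `(S, T)` does so
as well.

If any few vertices of a set `T` have many common neighbours, then joining any vertex
`v ∉ T` to exactly the vertices of `T` creates no wheel, so extremality yields
`∑ w ∈ T, x w ≤ λ * x v`. Applied to most of `N(u)ᶜ`, this makes every entry of `x` close to `1` and
every degree close to `n / 2`; so the sides of a maximum cut are nearly completely joined, and
internal degrees are less than `k`. Applied to the side `T` opposite to `u ∈ S`, it becomes
`∑ w ∈ T, x w ≤ ∑ w ∈ N(u), x w`: the non-neighbours of `u` in `T` weigh no more than the neighbours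
of `u` in `S`, which are boundedly many. As the entries of `x` are close to `1`, the non-neighbours
are then no more numerous either.
-/

section Spectrum

open Matrix Finset

lemma update_eq_update_zero_add_single {ι R : Type*} [DecidableEq ι] [AddMonoid R] (x : ι → R)
    (v : ι) (s : R) : Function.update x v s = Function.update x v 0 + Pi.single v s := by
  ext i
  obtain rfl | hi := eq_or_ne i v <;> simp [*]

variable {ι : Type*} [Fintype ι] {A : Matrix ι ι ℝ} {μ : ℝ}

lemma dotProduct_mulVec_le_abs (hA : ∀ i j, 0 ≤ A i j) (x : ι → ℝ) :
    x ⬝ᵥ A *ᵥ x ≤ |x| ⬝ᵥ A *ᵥ |x| := by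
  simp only [dotProduct, mulVec, Pi.abs_apply]
  refine sum_le_sum fun i _ => (le_abs_self _).trans ?_
  rw [abs_mul]
  gcongr
  refine (abs_sum_le_sum_abs _ _).trans_eq (sum_congr rfl fun j _ => ?_)
  rw [abs_mul, abs_of_nonneg (hA i j)]

variable [DecidableEq ι]

lemma posSemidef_algebraMap_sub (hA : A.IsHermitian) (hμ : μ ∈ upperBounds (spectrum ℝ A)) :
    (algebraMap ℝ _ μ - A).PosSemidef := by
  have hμA : (algebraMap ℝ (Matrix ι ι ℝ) μ).IsHermitian :=
    IsSelfAdjoint.algebraMap _ (IsSelfAdjoint.all μ)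
  refine posSemidef_iff_isHermitian_and_spectrum_nonneg.2 ⟨hμA.sub hA, ?_⟩
  rw [← spectrum.singleton_sub_eq]
  rintro _ ⟨_, rfl, a, ha, rfl⟩
  exact sub_nonneg.2 (hμ ha)

lemma dotProduct_algebraMap_sub_mulVec (x : ι → ℝ) :
    x ⬝ᵥ (algebraMap ℝ _ μ - A) *ᵥ x = μ * (x ⬝ᵥ x) - x ⬝ᵥ A *ᵥ x := by
  rw [Algebra.algebraMap_eq_smul_one, sub_mulVec, smul_mulVec, one_mulVec, dotProduct_sub,
    dotProduct_smul, smul_eq_mul]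

lemma dotProduct_mulVec_le (hA : A.IsHermitian) (hμ : μ ∈ upperBounds (spectrum ℝ A))
    (x : ι → ℝ) : x ⬝ᵥ A *ᵥ x ≤ μ * (x ⬝ᵥ x) := by
  have h := (posSemidef_algebraMap_sub hA hμ).dotProduct_mulVec_nonneg x
  rwa [star_trivial, dotProduct_algebraMap_sub_mulVec, sub_nonneg] at h

lemma mulVec_eq_smul_of_le (hA : A.IsHermitian) (hμ : μ ∈ upperBounds (spectrum ℝ A))
    {x : ι → ℝ} (hx : μ * (x ⬝ᵥ x) ≤ x ⬝ᵥ A *ᵥ x) : A *ᵥ x = μ • x := by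
  have h0 : star x ⬝ᵥ (algebraMap ℝ _ μ - A) *ᵥ x = 0 := by
    rw [star_trivial, dotProduct_algebraMap_sub_mulVec, sub_eq_zero]
    exact hx.antisymm (dotProduct_mulVec_le hA hμ x)
  have h := ((posSemidef_algebraMap_sub hA hμ).dotProduct_mulVec_zero_iff x).1 h0
  rwa [Algebra.algebraMap_eq_smul_one, sub_mulVec, smul_mulVec, one_mulVec, sub_eq_zero,
    eq_comm] at h

lemma mulVec_abs_eq_smul (hA : A.IsHermitian) (hA0 : ∀ i j, 0 ≤ A i j)
    (hμ : μ ∈ upperBounds (spectrum ℝ A)) {x : ι → ℝ} (hx : A *ᵥ x = μ • x) :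
    A *ᵥ |x| = μ • |x| := by
  refine mulVec_eq_smul_of_le hA hμ ?_
  calc μ * (|x| ⬝ᵥ |x|) = x ⬝ᵥ A *ᵥ x := by
        rw [hx, dotProduct_smul, smul_eq_mul]
        simp only [dotProduct, Pi.abs_apply, abs_mul_abs_self]
    _ ≤ |x| ⬝ᵥ A *ᵥ |x| := dotProduct_mulVec_le_abs hA0 x

lemma dotProduct_update_self {R : Type*} [NonUnitalNonAssocSemiring R] (x : ι → R) (v : ι)
    (s : R) : Function.update x v s ⬝ᵥ Function.update x v s =
      Function.update x v 0 ⬝ᵥ Function.update x v 0 + s * s := by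
  rw [update_eq_update_zero_add_single x v s]
  simp

lemma dotProduct_mulVec_update {R : Type*} [CommRing R] {A : Matrix ι ι R} (hA : A.IsSymm) {v : ι}
    (hv : A v v = 0) (x : ι → R) (s : R) :
    Function.update x v s ⬝ᵥ A *ᵥ Function.update x v s =
      Function.update x v 0 ⬝ᵥ A *ᵥ Function.update x v 0 + 2 * s * (A *ᵥ x) v := by
  have hz : (A *ᵥ x) v = (A *ᵥ Function.update x v 0) v := by
    conv_lhs => rw [← Function.update_eq_self v x, update_eq_update_zero_add_single]
    simp [mulVec_add, hv]
  have hcomm : Function.update x v 0 ⬝ᵥ A *ᵥ Pi.single v s =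
      Pi.single v s ⬝ᵥ A *ᵥ Function.update x v 0 := by
    rw [dotProduct_mulVec, ← mulVec_transpose, hA.eq, dotProduct_comm]
  rw [update_eq_update_zero_add_single x v s, mulVec_add, dotProduct_add, add_dotProduct,
    add_dotProduct, hcomm, hz]
  simp only [single_dotProduct, mulVec_single, op_smul_eq_smul, dotProduct_smul, col_apply, hv,
    mul_zero, smul_eq_mul, add_zero]
  ring

end Spectrum

section Perron

open Matrix Finset

variable {n : ℕ} (G : SimpleGraph (Fin n)) [DecidableRel G.Adj]

lemma lam1_eq_sSup_spectrum : lam1 G = sSup (spectrum ℝ (G.adjMatrix ℝ)) := by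
  classical
  simp only [lam1, Module.End.hasEigenvalue_iff_mem_spectrum, spectrum_toLin']
  rw [Set.ofPred_mem_eq]
  congr!

lemma isGreatest_lam1 (hn : 0 < n) : IsGreatest (spectrum ℝ (G.adjMatrix ℝ)) (lam1 G) := by
  have : Nonempty (Fin n) := ⟨⟨0, hn⟩⟩
  have hfin : (spectrum ℝ (G.adjMatrix ℝ)).Finite := Matrix.finite_real_spectrum
  have hne : (spectrum ℝ (G.adjMatrix ℝ)).Nonempty := by
    rw [(G.isHermitian_adjMatrix ℝ).spectrum_real_eq_range_eigenvalues]
    exact Set.range_nonempty _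
  rw [lam1_eq_sSup_spectrum]
  exact ⟨hne.csSup_mem hfin, fun μ hμ => le_csSup hfin.bddAbove hμ⟩

/-- A Perron vector of `G`: a nonnegative eigenvector for `lam1 G`, normalised to have maximal
entry `1`. -/
structure IsPerronVector (x : Fin n → ℝ) : Prop where
  nonneg : ∀ v, 0 ≤ x v
  le_one : ∀ v, x v ≤ 1
  exists_eq_one : ∃ u, x u = 1
  sum_neighborFinset : ∀ v, ∑ w ∈ G.neighborFinset v, x w = lam1 G * x v

variable {G}

lemma exists_isPerronVector (hn : 0 < n) : ∃ x, IsPerronVector G x := by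
  obtain ⟨hmem, hub⟩ := isGreatest_lam1 G hn
  rw [← spectrum_toLin', ← Module.End.hasEigenvalue_iff_mem_spectrum] at hmem
  obtain ⟨x, hx⟩ := hmem.exists_hasEigenvector
  have hAx : G.adjMatrix ℝ *ᵥ |x| = lam1 G • |x| :=
    mulVec_abs_eq_smul (G.isHermitian_adjMatrix ℝ)
      (fun i j => ite_nonneg zero_le_one le_rfl) hub hx.apply_eq_smul
  have : Nonempty (Fin n) := ⟨⟨0, hn⟩⟩
  obtain ⟨u, hu⟩ := Finite.exists_max |x|
  have hpos : 0 < |x| u := by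
    obtain ⟨i, hi⟩ := Function.ne_iff.1 hx.2
    exact (abs_pos.2 hi).trans_le (hu i)
  refine ⟨fun v => |x| v / |x| u, fun v => div_nonneg (abs_nonneg _) hpos.le,
    fun v => (div_le_one hpos).2 (hu v), ⟨u, div_self hpos.ne'⟩, fun v => ?_⟩
  rw [← sum_div, ← SimpleGraph.adjMatrix_mulVec_apply, hAx, Pi.smul_apply, smul_eq_mul,
    mul_div_assoc]

lemma two_mul_card_edgeFinset_le (hn : 0 < n) : 2 * (#G.edgeFinset : ℝ) ≤ lam1 G * n := by
  have h := dotProduct_mulVec_le (G.isHermitian_adjMatrix ℝ) (isGreatest_lam1 G hn).2 1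
  have h1 : (1 : Fin n → ℝ) ⬝ᵥ G.adjMatrix ℝ *ᵥ 1 = 2 * #G.edgeFinset := by
    simp only [one_dotProduct, SimpleGraph.adjMatrix_mulVec_apply, Pi.one_apply, sum_const,
      nsmul_one, SimpleGraph.card_neighborFinset_eq_degree]
    exact_mod_cast G.sum_degrees_eq_twice_card_edges
  rw [h1] at h
  simpa using h

end Perron

section Copies

open Finset

variable {α V : Type*} {F : SimpleGraph α} {G : SimpleGraph V} {v : V} {T : Finset V}

/-- The graph obtained from `G` by deleting all edges at `v` and joining `v` to `T`. -/
def replaceNeighbors (G : SimpleGraph V) (v : V) (T : Finset V) : SimpleGraph V :=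
  G.deleteIncidenceSet v ⊔ SimpleGraph.fromRel fun a b => a = v ∧ b ∈ T

lemma replaceNeighbors_adj_left (hv : v ∉ T) {w : V} :
    (replaceNeighbors G v T).Adj v w ↔ w ∈ T := by
  simp only [replaceNeighbors, SimpleGraph.sup_adj, SimpleGraph.deleteIncidenceSet_adj,
    SimpleGraph.fromRel_adj]
  grind

lemma replaceNeighbors_adj_of_ne {a b : V} (ha : a ≠ v) (hb : b ≠ v) :
    (replaceNeighbors G v T).Adj a b ↔ G.Adj a b := by
  simp only [replaceNeighbors, SimpleGraph.sup_adj, SimpleGraph.deleteIncidenceSet_adj,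
    SimpleGraph.fromRel_adj]
  grind

/-- A common neighbour, outside the copy, of the vertices of `T` in the copy can take over the role
of `v`. -/
lemma ContainsCopy.of_replaceNeighbors [Fintype α] (hv : v ∉ T)
    (hT : ∀ C ⊆ T, #C ≤ Fintype.card α →
      ∃ D : Finset V, Fintype.card α < #D ∧ ∀ d ∈ D, ∀ c ∈ C, G.Adj d c)
    (hF : ContainsCopy F (replaceNeighbors G v T)) : ContainsCopy F G := by
  classical
  obtain ⟨f, hf⟩ := hF
  have hcard : #(univ.map f) = Fintype.card α := by rw [card_map, card_univ]
  obtain ⟨D, hD, hDT⟩ := hT (T ∩ univ.map f) inter_subset_left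
    ((card_le_card inter_subset_right).trans_eq hcard)
  obtain ⟨d, hd, hdf⟩ := exists_mem_notMem_of_card_lt_card (hcard.trans_lt hD)
  have hfd (a : α) : f a ≠ d := by rintro rfl; simp at hdf
  have hswap {a : α} (ha : f a ≠ v) : Equiv.swap v d (f a) = f a :=
    Equiv.swap_apply_of_ne_of_ne ha (hfd a)
  have hdf_adj {a b : α} (ha : f a = v) (hab : F.Adj a b) :
      G.Adj (Equiv.swap v d (f a)) (Equiv.swap v d (f b)) := by
    have hb : f b ∈ T := (replaceNeighbors_adj_left hv).1 (ha ▸ hf a b hab)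
    rw [hswap (ne_of_mem_of_not_mem hb hv), ha, Equiv.swap_apply_left]
    exact hDT d hd _ (mem_inter.2 ⟨hb, mem_map_of_mem f (mem_univ b)⟩)
  refine ⟨f.trans (Equiv.swap v d).toEmbedding, fun a b hab => ?_⟩
  change G.Adj (Equiv.swap v d (f a)) (Equiv.swap v d (f b))
  by_cases ha : f a = v
  · exact hdf_adj ha hab
  by_cases hb : f b = v
  · exact (hdf_adj hb hab.symm).symm
  rw [hswap ha, hswap hb]
  exact (replaceNeighbors_adj_of_ne ha hb).1 (hf a b hab)

lemma containsCopy_wheelGraph_of_biclique {k : ℕ} {h : V} {P Q : Finset V} (hP : k ≤ #P)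
    (hQ : k ≤ #Q) (hhP : ∀ p ∈ P, G.Adj h p) (hhQ : ∀ q ∈ Q, G.Adj h q)
    (hPQ : ∀ p ∈ P, ∀ q ∈ Q, G.Adj p q) : ContainsCopy (wheelGraph (2 * k + 1)) G := by
  obtain ⟨p⟩ : Nonempty (Fin k ↪ P) := Function.Embedding.nonempty_of_card_le (by simpa)
  obtain ⟨q⟩ : Nonempty (Fin k ↪ Q) := Function.Embedding.nonempty_of_card_le (by simpa)
  have hp (i) : G.Adj h (p i) := hhP _ (p i).2
  have hq (i) : G.Adj h (q i) := hhQ _ (q i).2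
  have hpq (i j) : G.Adj (p i) (q j) := hPQ _ (p i).2 _ (q j).2
  -- The hub is sent to `h`, and the rim alternates between `P` and `Q`.
  let f (i : Fin (2 * k + 1)) : V :=
    if hi₀ : i.val = 0 then h
    else if hi : i.val % 2 = 1 then p ⟨i.val / 2, by omega⟩
    else q ⟨(i.val - 1) / 2, by omega⟩
  have hf : ∀ a b, (wheelGraph (2 * k + 1)).Adj a b → G.Adj (f a) (f b) := by
    rintro a b ⟨hne, hab⟩
    simp only [f]
    split_ifs
    all_goals first
      | omega
      | simp only [hp, hq, hpq, (hp _).symm, (hq _).symm, (hpq _ _).symm]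
  have hinj : Function.Injective f := by
    intro a b hab
    simp only [f] at hab
    split_ifs at hab
    · ext; omega
    · exact absurd hab (hp _).ne
    · exact absurd hab (hq _).ne
    · exact absurd hab (hp _).ne'
    · have := Fin.ext_iff.1 (p.injective (Subtype.ext hab))
      ext; grind
    · exact absurd hab (hpq _ _).ne
    · exact absurd hab (hq _).ne'
    · exact absurd hab (hpq _ _).ne'
    · have := Fin.ext_iff.1 (q.injective (Subtype.ext hab))
      ext; grind
  exact ⟨⟨f, hinj⟩, hf⟩

lemma wheelFree_of_cliqueFree {t n : ℕ} (ht : 3 ≤ t) {G : SimpleGraph (Fin n)}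
    (hG : G.CliqueFree 3) : WheelFree t G := by
  rintro ⟨f, hf⟩
  refine hG {f ⟨0, by omega⟩, f ⟨1, by omega⟩, f ⟨2, by omega⟩}
    (SimpleGraph.is3Clique_triple_iff.2 ⟨?_, ?_, ?_⟩) <;>
  exact hf _ _ ⟨by simp, by simp⟩

end Copies

section Counting

open Finset

lemma sum_le_card_mul_add_card_filter_mul {ι R : Type*} [CommSemiring R] [LinearOrder R]
    [IsStrictOrderedRing R] (s : Finset ι) {f : ι → R} {c M : R} (hc : 0 ≤ c)
    (hM : ∀ i ∈ s, f i ≤ M) : ∑ i ∈ s, f i ≤ #s * c + #{i ∈ s | c ≤ f i} * M := by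
  have hle : ∀ i ∈ s, f i ≤ c + if c ≤ f i then M else 0 := by
    intro i hi
    split_ifs with h
    · exact (hM i hi).trans (le_add_of_nonneg_left hc)
    · simpa using (not_le.1 h).le
  refine (sum_le_sum hle).trans_eq ?_
  rw [sum_add_distrib, sum_const, nsmul_eq_mul, ← sum_filter, sum_const, nsmul_eq_mul]

variable {α β : Type*} (r : α → β → Prop) [∀ a, DecidablePred (r a)]

lemma card_interedges_eq_sum (s : Finset α) (t : Finset β) :
    #(Rel.interedges r s t) = ∑ a ∈ s, #{b ∈ t | r a b} := by
  simp only [Rel.interedges, card_filter, sum_product]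

/-- Pigeonhole: many vertices of `W` have the same set of at least `k` neighbours in `L`. -/
lemma exists_biclique {k : ℕ} {d : ℝ} {L : Finset α} {W : Finset β}
    (hL : ∀ a ∈ L, d ≤ #{b ∈ W | r a b}) (h : #W * k + 2 ^ #L * k * #L < #L * d) :
    ∃ P ⊆ L, ∃ Q ⊆ W, k ≤ #P ∧ k ≤ #Q ∧ ∀ p ∈ P, ∀ q ∈ Q, r p q := by
  classical
  let N (b : β) : Finset α := {a ∈ L | r a b}
  have hsum : #L * d ≤ ∑ b ∈ W, (#(N b) : ℝ) := by
    rw [← nsmul_eq_mul]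
    refine (card_nsmul_le_sum L _ d hL).trans_eq ?_
    exact_mod_cast sum_card_bipartiteAbove_eq_sum_card_bipartiteBelow r
  have hmarkov := sum_le_card_mul_add_card_filter_mul W (f := fun b => (#(N b) : ℝ))
    k.cast_nonneg fun b _ => Nat.cast_le.2 (card_filter_le L _)
  simp only [Nat.cast_le] at hmarkov
  have hmany : #L.powerset * k < #{b ∈ W | k ≤ #(N b)} := by
    rw [card_powerset]
    have : (2 ^ #L * k * #L : ℝ) < #{b ∈ W | k ≤ #(N b)} * #L := by linarith
    exact_mod_cast lt_of_mul_lt_mul_right this (Nat.cast_nonneg _)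
  obtain ⟨P, hP, hPcard⟩ := exists_lt_card_fiber_of_mul_lt_card_of_maps_to
    (fun b _ => mem_powerset.2 (filter_subset (fun a => r a b) L)) hmany
  obtain ⟨b, hb⟩ := card_pos.1 (k.zero_le.trans_lt hPcard)
  simp only [mem_filter] at hb
  refine ⟨P, mem_powerset.1 hP, _, (filter_subset _ _).trans (filter_subset _ _),
    hb.2 ▸ hb.1.2, hPcard.le, fun p hp q hq => ?_⟩
  rw [← (mem_filter.1 hq).2] at hp
  exact (mem_filter.1 hp).2

lemma half_mul_le_card_of_mul_sq_lt_card_interedges {A : Finset α} {B : Finset β} {n γ : ℝ}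
    (hn : 0 < n) (hγ : 0 ≤ γ) (hA : #A ≤ n) (hB : #B ≤ n)
    (hAB : γ * n ^ 2 < #(Rel.interedges r A B)) :
    γ * n / 2 ≤ #{a ∈ A | γ * n / 2 ≤ #{b ∈ B | r a b}} := by
  rw [card_interedges_eq_sum, Nat.cast_sum] at hAB
  have hmarkov := sum_le_card_mul_add_card_filter_mul A (c := γ * n / 2) (M := n)
    (f := fun a => (#{b ∈ B | r a b} : ℝ)) (by positivity)
    fun a _ => (Nat.cast_le.2 (card_filter_le B _)).trans hB
  have hle : (#A : ℝ) * (γ * n / 2) ≤ n * (γ * n / 2) := by gcongr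
  refine le_of_mul_le_mul_right ?_ hn
  linarith

lemma exists_forall_exists_biclique (k : ℕ) {γ : ℝ} (hγ : 0 < γ) :
    ∃ N : ℕ, ∀ n ≥ N, ∀ {α β : Type*} (r : α → β → Prop) [∀ a, DecidablePred (r a)]
      {A : Finset α} {B : Finset β}, #A ≤ n → #B ≤ n → γ * n ^ 2 < #(Rel.interedges r A B) →
      ∃ P ⊆ A, ∃ Q ⊆ B, k ≤ #P ∧ k ≤ #Q ∧ ∀ p ∈ P, ∀ q ∈ Q, r p q := by
  obtain ⟨m, hm⟩ := exists_nat_ge (2 * (k + 1) / γ)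
  obtain ⟨N, hN⟩ := exists_nat_ge (2 * m / γ)
  rw [div_le_iff₀ hγ] at hm hN
  refine ⟨max N (2 ^ m * k * m + 1), fun n hn α β r _ A B hA hB hAB => ?_⟩
  have hnN : (N : ℝ) ≤ n := by exact_mod_cast (le_max_left _ _).trans hn
  have hnk : (2 ^ m * k * m : ℝ) < n := by exact_mod_cast (le_max_right _ _).trans hn
  have hn0 : (0 : ℝ) < n := lt_of_le_of_lt (by positivity) hnk
  have hB' : (#B : ℝ) ≤ n := Nat.cast_le.2 hB
  have hmn : (m : ℝ) ≤ γ * n / 2 := by nlinarith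
  have hrich := half_mul_le_card_of_mul_sq_lt_card_interedges r hn0 hγ.le (Nat.cast_le.2 hA) hB' hAB
  obtain ⟨L, hLA, hLm⟩ := exists_subset_card_eq (Nat.cast_le.1 (hmn.trans hrich))
  have hlt : (#B * k + 2 ^ #L * k * #L : ℝ) < #L * (γ * n / 2) := by
    rw [hLm]
    calc (#B * k + 2 ^ m * k * m : ℝ) < n * k + n := add_lt_add_of_le_of_lt (by gcongr) hnk
      _ = n * (2 * (k + 1)) / 2 := by ring
      _ ≤ n * (m * γ) / 2 := by gcongr
      _ = m * (γ * n / 2) := by ring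
  obtain ⟨P, hP, hrest⟩ := exists_biclique r (fun a ha => (mem_filter.1 (hLA ha)).2) hlt
  exact ⟨P, hP.trans (hLA.trans (filter_subset _ _)), hrest⟩

end Counting

section DenseCut

open Finset

variable {V : Type*} (G : SimpleGraph V) [DecidableRel G.Adj]

/-- Every vertex of `S` has at most `β` non-neighbours in `T`. -/
def IsNearlyJoined (β : ℝ) (S T : Finset V) : Prop :=
  ∀ v ∈ S, #{w ∈ T | ¬ G.Adj v w} ≤ β

variable {G} in
lemma IsNearlyJoined.exists_subset_forall_adj {β : ℝ} {S T C : Finset V}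
    (h : IsNearlyJoined G β S T) (hC : C ⊆ S) :
    ∃ D ⊆ T, #T - #C * β ≤ #D ∧ ∀ w ∈ D, ∀ c ∈ C, G.Adj w c := by
  classical
  have hsub : {w ∈ T | ¬ ∀ c ∈ C, G.Adj w c} ⊆ C.biUnion fun c => {w ∈ T | ¬ G.Adj c w} := by
    intro w hw
    simp only [mem_filter, not_forall, exists_prop] at hw
    obtain ⟨hwT, c, hc, hwc⟩ := hw
    exact mem_biUnion.2 ⟨c, hc, mem_filter.2 ⟨hwT, fun h => hwc h.symm⟩⟩
  have hmiss : (#{w ∈ T | ¬ ∀ c ∈ C, G.Adj w c} : ℝ) ≤ #C * β := by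
    calc (#{w ∈ T | ¬ ∀ c ∈ C, G.Adj w c} : ℝ) ≤ ∑ c ∈ C, (#{w ∈ T | ¬ G.Adj c w} : ℝ) := by
          exact_mod_cast (card_le_card hsub).trans card_biUnion_le
      _ ≤ #C * β := (sum_le_card_nsmul C _ β fun c hc => h c (hC hc)).trans_eq (nsmul_eq_mul _ _)
  have hsplit := card_filter_add_card_filter_not (s := T) fun w => ∀ c ∈ C, G.Adj w c
  have : (#{w ∈ T | ∀ c ∈ C, G.Adj w c} + #{w ∈ T | ¬ ∀ c ∈ C, G.Adj w c} : ℝ) = #T := by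
    exact_mod_cast hsplit
  exact ⟨_, filter_subset _ T, by linarith, fun w hw => (mem_filter.1 hw).2⟩

variable [Fintype V]

/-- Every neighbourhood spans at most `ε n²` ordered pairs of adjacent vertices, where `n` is the
number of vertices. -/
def HasSparseNeighborhoods (ε : ℝ) : Prop :=
  ∀ v, #(G.interedges (G.neighborFinset v) (G.neighborFinset v)) ≤ ε * Fintype.card V ^ 2

variable [DecidableEq V]

/-- The cut `(A, Aᶜ)` has at least `(1/4 - τ²) n²` edges, where `n` is the number of vertices. -/
def IsDenseCut (τ : ℝ) (A : Finset V) : Prop :=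
  (1 / 4 - τ ^ 2) * Fintype.card V ^ 2 ≤ #(G.interedges A Aᶜ)

variable {G}

namespace IsDenseCut

variable {τ : ℝ} {A : Finset V} (h : IsDenseCut G τ A)
include h

lemma compl : IsDenseCut G τ Aᶜ := by
  have : Std.Symm G.Adj := G.symm
  rw [IsDenseCut, compl_compl, SimpleGraph.interedges, Rel.card_interedges_comm]
  exact h

lemma abs_card_sub_le (hτ : 0 ≤ τ) : |#A - (Fintype.card V : ℝ) / 2| ≤ τ * Fintype.card V := by
  have hcard : (#A + #Aᶜ : ℝ) = Fintype.card V := by exact_mod_cast card_add_card_compl A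
  have hle : (#(G.interedges A Aᶜ) : ℝ) ≤ #A * #Aᶜ := by
    exact_mod_cast G.card_interedges_le_mul A Aᶜ
  rw [IsDenseCut, ← hcard] at h
  rw [← hcard]
  refine abs_le_of_sq_le_sq ?_ (by positivity)
  linarith

lemma card_nonadj_le : #(Rel.interedges (fun v w => ¬ G.Adj v w) A Aᶜ) ≤
    τ ^ 2 * (Fintype.card V : ℝ) ^ 2 := by
  have hcard : (#A + #Aᶜ : ℝ) = Fintype.card V := by exact_mod_cast card_add_card_compl A
  have hsplit : (#(G.interedges A Aᶜ) + #(Rel.interedges (fun v w => ¬ G.Adj v w) A Aᶜ) : ℝ) =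
      #A * #Aᶜ := by
    exact_mod_cast Rel.card_interedges_add_card_interedges_compl G.Adj A Aᶜ
  have hamgm := four_mul_le_sq_add (#A : ℝ) #Aᶜ
  rw [IsDenseCut] at h
  rw [hcard] at hamgm
  linarith

lemma card_mul_card_le {P Q : Finset V} (hP : P ⊆ A) (hQ : Q ⊆ Aᶜ) :
    #P * #Q ≤ #(G.interedges P Q) + τ ^ 2 * (Fintype.card V : ℝ) ^ 2 := by
  have hsplit : (#(G.interedges P Q) + #(Rel.interedges (fun v w => ¬ G.Adj v w) P Q) : ℝ) =
      #P * #Q := by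
    exact_mod_cast Rel.card_interedges_add_card_interedges_compl G.Adj P Q
  have hmono : (#(Rel.interedges (fun v w => ¬ G.Adj v w) P Q) : ℝ) ≤
      #(Rel.interedges (fun v w => ¬ G.Adj v w) A Aᶜ) :=
    Nat.cast_le.2 (card_le_card (Rel.interedges_mono hP hQ))
  linarith [h.card_nonadj_le]

lemma card_filter_le (hτ : 0 < τ * Fintype.card V) :
    #{v ∈ A | τ * Fintype.card V < #{w ∈ Aᶜ | ¬ G.Adj v w}} ≤ τ * Fintype.card V := by
  set B : Finset V := {v ∈ A | τ * Fintype.card V < #{w ∈ Aᶜ | ¬ G.Adj v w}}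
  refine le_of_mul_le_mul_right ?_ hτ
  calc (#B : ℝ) * (τ * Fintype.card V) ≤ ∑ v ∈ B, (#{w ∈ Aᶜ | ¬ G.Adj v w} : ℝ) := by
        rw [← nsmul_eq_mul]
        exact card_nsmul_le_sum B _ _ fun v hv => (mem_filter.1 hv).2.le
    _ ≤ ∑ v ∈ A, (#{w ∈ Aᶜ | ¬ G.Adj v w} : ℝ) :=
        sum_le_sum_of_subset_of_nonneg (filter_subset _ A) fun _ _ _ => Nat.cast_nonneg _
    _ ≤ τ ^ 2 * (Fintype.card V : ℝ) ^ 2 := by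
        rw [← Nat.cast_sum, ← card_interedges_eq_sum]
        exact h.card_nonadj_le
    _ = τ * Fintype.card V * (τ * Fintype.card V) := by ring

end IsDenseCut

lemma exists_forall_hasSparseNeighborhoods (k : ℕ) {ε : ℝ} (hε : 0 < ε) :
    ∃ N : ℕ, ∀ n ≥ N, ∀ (G : SimpleGraph (Fin n)) [DecidableRel G.Adj],
      WheelFree (2 * k + 1) G → HasSparseNeighborhoods G ε := by
  obtain ⟨N, hN⟩ := exists_forall_exists_biclique k hε
  refine ⟨N, fun n hn G _ hG h => ?_⟩
  by_contra! hdense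
  rw [Fintype.card_fin] at hdense
  have hcard : #(G.neighborFinset h) ≤ n := card_finset_fin_le _
  obtain ⟨P, hP, Q, hQ, hPk, hQk, hPQ⟩ := hN n hn G.Adj hcard hcard hdense
  exact hG (containsCopy_wheelGraph_of_biclique hPk hQk
    (fun p hp => (G.mem_neighborFinset h p).1 (hP hp))
    (fun q hq => (G.mem_neighborFinset h q).1 (hQ hq)) hPQ)

end DenseCut

section Replacement

open Finset Matrix

lemma dotProduct_adjMatrix_replaceNeighbors_mulVec {V R : Type*} [Fintype V] [DecidableEq V]
    [CommRing R] (G : SimpleGraph V) [DecidableRel G.Adj] {v : V} {T : Finset V}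
    [DecidableRel (replaceNeighbors G v T).Adj] (x : V → R) :
    Function.update x v 0 ⬝ᵥ (replaceNeighbors G v T).adjMatrix R *ᵥ Function.update x v 0 =
      Function.update x v 0 ⬝ᵥ G.adjMatrix R *ᵥ Function.update x v 0 := by
  simp only [dotProduct, mulVec, mul_sum]
  refine sum_congr rfl fun a _ => sum_congr rfl fun b _ => ?_
  obtain rfl | ha := eq_or_ne a v
  · simp
  obtain rfl | hb := eq_or_ne b v
  · simp
  simp only [SimpleGraph.adjMatrix_apply, replaceNeighbors_adj_of_ne ha hb]

variable {n t : ℕ} {G : SimpleGraph (Fin n)} [DecidableRel G.Adj] {x : Fin n → ℝ} {v : Fin n}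
  {T A : Finset (Fin n)} {β : ℝ}

/-- The test vector is `x` with the entry at `v` replaced by `(∑ w ∈ T, x w) / lam1 G`. -/
lemma IsPerronVector.sum_le_of_lam1_replaceNeighbors_le (hx : IsPerronVector G x)
    (hpos : 0 < lam1 G) (hv : v ∉ T) (hle : lam1 (replaceNeighbors G v T) ≤ lam1 G) :
    ∑ w ∈ T, x w ≤ lam1 G * x v := by
  classical
  set H := replaceNeighbors G v T
  set σ := ∑ w ∈ T, x w
  obtain ⟨s, hs⟩ : ∃ s, lam1 G * s = σ := ⟨σ / lam1 G, mul_div_cancel₀ σ hpos.ne'⟩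
  have hGx : G.adjMatrix ℝ *ᵥ x = lam1 G • x := by
    ext w
    rw [SimpleGraph.adjMatrix_mulVec_apply, hx.sum_neighborFinset, Pi.smul_apply, smul_eq_mul]
  have hHxv : (H.adjMatrix ℝ *ᵥ x) v = σ := by
    rw [SimpleGraph.adjMatrix_mulVec_apply]
    refine sum_congr (Finset.ext fun w => ?_) fun _ _ => rfl
    rw [SimpleGraph.mem_neighborFinset, replaceNeighbors_adj_left hv]
  have hquadG := dotProduct_mulVec_update G.isSymm_adjMatrix (v := v) (by simp) x (x v)
  have hsqG := dotProduct_update_self x v (x v)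
  rw [Function.update_eq_self, hGx, dotProduct_smul, Pi.smul_apply, smul_eq_mul,
    smul_eq_mul] at hquadG
  rw [Function.update_eq_self] at hsqG
  have hquadH := dotProduct_mulVec_update H.isSymm_adjMatrix (v := v) (by simp) x s
  rw [dotProduct_adjMatrix_replaceNeighbors_mulVec, hHxv] at hquadH
  have hrayleigh : Function.update x v s ⬝ᵥ H.adjMatrix ℝ *ᵥ Function.update x v s ≤
      lam1 G * (Function.update x v 0 ⬝ᵥ Function.update x v 0 + s * s) := by
    rw [← dotProduct_update_self]
    refine (dotProduct_mulVec_le (H.isHermitian_adjMatrix ℝ) (isGreatest_lam1 H v.pos).2 _).trans ?_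
    gcongr
    simpa using dotProduct_star_self_nonneg (Function.update x v s)
  have hsq : σ ^ 2 ≤ (lam1 G * x v) ^ 2 := by
    have : s * σ ≤ lam1 G * x v ^ 2 := by
      have hss : lam1 G * (s * s) = s * σ := by rw [← hs]; ring
      rw [hsqG] at hquadG
      linarith
    calc σ ^ 2 = lam1 G * (s * σ) := by rw [← hs]; ring
      _ ≤ lam1 G * (lam1 G * x v ^ 2) := by gcongr
      _ = (lam1 G * x v) ^ 2 := by ring
  exact le_of_sq_le_sq hsq (mul_nonneg hpos.le (hx.nonneg v))

lemma IsSpexWheel.sum_le (hG : IsSpexWheel t G) (hx : IsPerronVector G x) (hpos : 0 < lam1 G)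
    (hTA : IsNearlyJoined G β T A) (hβ : 0 ≤ β) (hA : t + t * β < #A) (hv : v ∉ T) :
    ∑ w ∈ T, x w ≤ lam1 G * x v := by
  refine hx.sum_le_of_lam1_replaceNeighbors_le hpos hv (hG.2 _ fun hcopy => hG.1 ?_)
  refine hcopy.of_replaceNeighbors hv fun C hC hCt => ?_
  rw [Fintype.card_fin] at hCt ⊢
  obtain ⟨D, -, hD, hDC⟩ := hTA.exists_subset_forall_adj hC
  have hCβ : #C * β ≤ t * β := by gcongr
  exact ⟨D, Nat.cast_lt.1 (lt_of_lt_of_le (by linarith) hD), hDC⟩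

end Replacement

section PerronVector

open Finset

/-- `τ` is small in terms of `k`, and `n` is large in terms of `τ`. -/
structure IsTolerance (k n : ℕ) (τ : ℝ) : Prop where
  pos : 0 < τ
  mul_le : (2 * k + 1) * τ ≤ 1 / 300
  two_le : 2 ≤ τ ^ 2 * n

namespace IsTolerance

variable {k n : ℕ} {τ : ℝ} (hτ : IsTolerance k n τ)
include hτ

lemma le : τ ≤ 1 / 300 := by
  have : (0 : ℝ) ≤ k * τ := mul_nonneg k.cast_nonneg hτ.pos.le
  linarith [hτ.mul_le]

lemma card_pos : 0 < n := by
  refine Nat.pos_of_ne_zero ?_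
  rintro rfl
  exact absurd hτ.two_le (by norm_num)

lemma cast_pos : (0 : ℝ) < n := Nat.cast_pos.2 hτ.card_pos

lemma mul_cast_pos : 0 < τ * n := mul_pos hτ.pos hτ.cast_pos

lemma cast_le : (2 * k + 1 : ℝ) ≤ τ * n / 600 := by
  have h₁ : (2 * k + 1) * τ * (τ * n) ≤ 1 / 300 * (τ * n) :=
    mul_le_mul_of_nonneg_right hτ.mul_le hτ.mul_cast_pos.le
  have h₂ : (2 * k + 1) * 2 ≤ (2 * k + 1) * (τ ^ 2 * n) :=
    mul_le_mul_of_nonneg_left hτ.two_le (by positivity)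
  linarith

lemma mul_cast_le : τ * n ≤ n / 300 := by
  linarith [mul_le_mul_of_nonneg_right hτ.le hτ.cast_pos.le]

lemma mul_mul_cast_le : (2 * k + 1) * (τ * n) ≤ n / 300 := by
  linarith [mul_le_mul_of_nonneg_right hτ.mul_le hτ.cast_pos.le]

end IsTolerance

lemma exists_isTolerance (k : ℕ) : ∃ τ : ℝ, 0 < τ ∧ ∃ N : ℕ, ∀ n ≥ N, IsTolerance k n τ := by
  have hτ : (0 : ℝ) < 1 / (300 * (2 * k + 1)) := by positivity
  obtain ⟨N, hN⟩ := exists_nat_ge (2 / (1 / (300 * (2 * k + 1)) : ℝ) ^ 2)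
  refine ⟨_, hτ, N, fun n hn => ⟨hτ, le_of_eq (by field_simp), ?_⟩⟩
  rw [div_le_iff₀' (by positivity)] at hN
  refine hN.trans ?_
  gcongr

lemma IsSpexWheel.le_lam1 {n t : ℕ} {G : SimpleGraph (Fin n)} (hG : IsSpexWheel t G) (ht : 3 ≤ t)
    (hn : 0 < n) : (n : ℝ) / 2 - 1 ≤ lam1 G := by
  have hturan := two_mul_card_edgeFinset_le (G := SimpleGraph.turanGraph n 2) hn
  have hcard : n ^ 2 ≤ 4 * #(SimpleGraph.turanGraph n 2).edgeFinset + 4 := by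
    have hmod : (n % 2) ^ 2 ≤ 1 := Nat.pow_le_one_iff two_ne_zero |>.2 (by omega)
    rw [SimpleGraph.card_edgeFinset_turanGraph]
    omega
  have hfree : WheelFree t (SimpleGraph.turanGraph n 2) :=
    wheelFree_of_cliqueFree ht (SimpleGraph.turanGraph_cliqueFree two_pos)
  have hcard' : (n : ℝ) ^ 2 ≤ 4 * #(SimpleGraph.turanGraph n 2).edgeFinset + 4 := by
    exact_mod_cast hcard
  have hn1 : (1 : ℝ) ≤ n := by exact_mod_cast hn
  refine le_trans ?_ (hG.2 _ hfree)
  nlinarith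

lemma sum_neighborFinset_eq_sum_filter_add {V R : Type*} [Fintype V] [DecidableEq V]
    [AddCommMonoid R] (G : SimpleGraph V) [DecidableRel G.Adj] (A : Finset V) (v : V) (f : V → R) :
    ∑ w ∈ G.neighborFinset v, f w =
      ∑ w ∈ A with G.Adj v w, f w + ∑ w ∈ Aᶜ with G.Adj v w, f w := by
  rw [SimpleGraph.neighborFinset_eq_filter]
  simp only [sum_filter]
  exact (sum_add_sum_compl A _).symm

namespace IsPerronVector

variable {n : ℕ} {G : SimpleGraph (Fin n)} [DecidableRel G.Adj] {x : Fin n → ℝ} {u : Fin n}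

lemma sum_le_card (hx : IsPerronVector G x) (s : Finset (Fin n)) : ∑ v ∈ s, x v ≤ #s :=
  (sum_le_card_nsmul s x 1 fun v _ => hx.le_one v).trans_eq (nsmul_one _)

lemma sq_lam1_le (hx : IsPerronVector G x) (hu : x u = 1) :
    lam1 G ^ 2 ≤ #(G.interedges (G.neighborFinset u) (G.neighborFinset u)) +
      ∑ w ∈ G.neighborFinset u, ∑ z ∈ (G.neighborFinset u)ᶜ with G.Adj w z, x z := by
  set A := G.neighborFinset u
  have hsplit (w : Fin n) : lam1 G * x w = ∑ z ∈ A with G.Adj w z, x z +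
      ∑ z ∈ Aᶜ with G.Adj w z, x z := by
    rw [← hx.sum_neighborFinset, sum_neighborFinset_eq_sum_filter_add G A]
  calc lam1 G ^ 2 = ∑ w ∈ A, lam1 G * x w := by
        rw [← mul_sum, hx.sum_neighborFinset, hu]; ring
    _ = ∑ w ∈ A, ∑ z ∈ A with G.Adj w z, x z + ∑ w ∈ A, ∑ z ∈ Aᶜ with G.Adj w z, x z := by
        rw [← sum_add_distrib]
        exact sum_congr rfl fun w _ => hsplit w
    _ ≤ _ := by
        gcongr
        rw [SimpleGraph.interedges, card_interedges_eq_sum, Nat.cast_sum]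
        exact sum_le_sum fun w _ => hx.sum_le_card _

lemma sq_lam1_le_card_interedges_add (hx : IsPerronVector G x) (hu : x u = 1) :
    lam1 G ^ 2 ≤ #(G.interedges (G.neighborFinset u) (G.neighborFinset u)) +
      #(G.interedges (G.neighborFinset u) (G.neighborFinset u)ᶜ) := by
  refine (hx.sq_lam1_le hu).trans ?_
  gcongr
  rw [SimpleGraph.interedges, card_interedges_eq_sum, Nat.cast_sum]
  exact sum_le_sum fun w _ => hx.sum_le_card _

lemma sq_lam1_le_card_interedges_add_mul_sum (hx : IsPerronVector G x) (hu : x u = 1) :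
    lam1 G ^ 2 ≤ #(G.interedges (G.neighborFinset u) (G.neighborFinset u)) +
      #(G.neighborFinset u) * ∑ z ∈ (G.neighborFinset u)ᶜ, x z := by
  refine (hx.sq_lam1_le hu).trans ?_
  gcongr
  rw [← nsmul_eq_mul]
  exact sum_le_card_nsmul _ _ _ fun w _ =>
    sum_le_sum_of_subset_of_nonneg (filter_subset _ _) fun z _ _ => hx.nonneg z

end IsPerronVector

end PerronVector

section NeighborhoodCut

open Finset

lemma IsPerronVector.lam1_le {n : ℕ} {τ : ℝ} {G : SimpleGraph (Fin n)} [DecidableRel G.Adj]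
    {x : Fin n → ℝ} (hx : IsPerronVector G x) (hτ : 0 ≤ τ)
    (hsp : HasSparseNeighborhoods G (τ ^ 2 / 2)) : lam1 G ≤ (1 / 2 + τ) * n := by
  obtain ⟨u, hu⟩ := hx.exists_eq_one
  set A := G.neighborFinset u
  have hsq := hx.sq_lam1_le_card_interedges_add hu
  have hin := hsp u
  have hcut : (#(G.interedges A Aᶜ) : ℝ) ≤ #A * #Aᶜ := by
    exact_mod_cast G.card_interedges_le_mul A Aᶜ
  have hcard : (#A + #Aᶜ : ℝ) = n := by
    exact_mod_cast (card_add_card_compl A).trans (Fintype.card_fin n)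
  have hamgm := four_mul_le_sq_add (#A : ℝ) #Aᶜ
  rw [hcard] at hamgm
  rw [Fintype.card_fin] at hin
  refine le_of_sq_le_sq ?_ (by positivity)
  have : 0 ≤ (τ + τ ^ 2 / 2) * (n : ℝ) ^ 2 := by positivity
  linarith

namespace IsSpexWheel

variable {k n : ℕ} {τ : ℝ} {G : SimpleGraph (Fin n)} (hG : IsSpexWheel (2 * k + 1) G) (hk : 0 < k)
  (hτ : IsTolerance k n τ)
include hG hk hτ

lemma mul_sq_le_sq_lam1 : (1 / 4 - τ ^ 2 / 2) * n ^ 2 ≤ lam1 G ^ 2 := by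
  have hlam := hG.le_lam1 (by omega) hτ.card_pos
  have hn : 2 * (n : ℝ) ≤ τ ^ 2 * n * n := mul_le_mul_of_nonneg_right hτ.two_le hτ.cast_pos.le
  have hn2 : (0 : ℝ) ≤ n / 2 - 1 := by
    have : (0 : ℝ) ≤ k := k.cast_nonneg
    linarith [hτ.cast_le, hτ.mul_cast_le]
  have := pow_le_pow_left₀ hn2 hlam 2
  linarith

lemma lam1_pos : 0 < lam1 G := by
  have hlam := hG.le_lam1 (by omega) hτ.card_pos
  have : (0 : ℝ) ≤ k := k.cast_nonneg
  linarith [hτ.cast_le, hτ.mul_cast_le]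

variable [DecidableRel G.Adj] {x : Fin n → ℝ} {u : Fin n}
  (hsp : HasSparseNeighborhoods G (τ ^ 2 / 2)) (hx : IsPerronVector G x)
include hsp hx

lemma isDenseCut_neighborFinset (hu : x u = 1) : IsDenseCut G τ (G.neighborFinset u) := by
  have hsq := hx.sq_lam1_le_card_interedges_add hu
  have hin := hsp u
  rw [Fintype.card_fin] at hin
  rw [IsDenseCut, Fintype.card_fin]
  linarith [hG.mul_sq_le_sq_lam1 hk hτ]

lemma le_sum_compl_neighborFinset (hu : x u = 1) :
    (1 / 2 - τ) * n ≤ ∑ z ∈ (G.neighborFinset u)ᶜ, x z := by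
  set A := G.neighborFinset u
  have hdense := hG.isDenseCut_neighborFinset hk hτ hsp hx hu
  have habs := abs_le.1 (hdense.abs_card_sub_le hτ.pos.le)
  have hin := hsp u
  rw [Fintype.card_fin] at habs hin
  have hA : (#A : ℝ) ≤ (1 / 2 + τ) * n := by linarith
  have hApos : (0 : ℝ) < #A := by linarith [hτ.mul_cast_le, hτ.cast_pos]
  refine le_of_mul_le_mul_left ?_ hApos
  calc #A * ((1 / 2 - τ) * n) ≤ (1 / 2 + τ) * n * ((1 / 2 - τ) * n) := by
        have : (0 : ℝ) ≤ (1 / 2 - τ) * n := by linarith [hτ.mul_cast_le, hτ.cast_pos]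
        gcongr
    _ = (1 / 4 - τ ^ 2 / 2) * n ^ 2 - τ ^ 2 / 2 * n ^ 2 := by ring
    _ ≤ #A * ∑ z ∈ Aᶜ, x z := by
        linarith [hG.mul_sq_le_sq_lam1 hk hτ, hx.sq_lam1_le_card_interedges_add_mul_sum hu]

lemma le_lam1_mul (v : Fin n) : (1 / 2 - 3 * τ) * n ≤ lam1 G * x v := by
  obtain ⟨u, hu⟩ := hx.exists_eq_one
  set A := G.neighborFinset u
  have hdense := hG.isDenseCut_neighborFinset hk hτ hsp hx hu
  have habs := abs_le.1 (hdense.abs_card_sub_le hτ.pos.le)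
  set B : Finset (Fin n) := {w ∈ Aᶜ | τ * n < #{z ∈ A | ¬ G.Adj w z}}
  have hB : #B ≤ τ * n := by
    have := hdense.compl.card_filter_le (by rw [Fintype.card_fin]; exact hτ.mul_cast_pos)
    rwa [Fintype.card_fin, compl_compl] at this
  rw [Fintype.card_fin] at habs
  have hjoin : IsNearlyJoined G (τ * n) (Aᶜ \ insert v B) A := by
    intro w hw
    by_contra! hlt
    simp only [mem_sdiff, mem_insert, not_or] at hw
    exact hw.2.2 (mem_filter.2 ⟨hw.1, hlt⟩)
  have hlarge : (2 * k + 1 : ℕ) + (2 * k + 1 : ℕ) * (τ * n) < (#A : ℝ) := by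
    push_cast
    linarith [hτ.cast_le, hτ.mul_cast_le, hτ.cast_pos, hτ.mul_mul_cast_le]
  have hreplace := hG.sum_le (v := v) hx (hG.lam1_pos hk hτ) hjoin hτ.mul_cast_pos.le hlarge
    (by simp)
  have hremoved : ∑ w ∈ insert v B, x w ≤ τ * n + 1 := by
    refine (hx.sum_le_card _).trans ?_
    have : (#(insert v B) : ℝ) ≤ #B + 1 := by exact_mod_cast card_insert_le v B
    linarith
  have hcover : ∑ w ∈ Aᶜ, x w ≤ ∑ w ∈ Aᶜ \ insert v B, x w + ∑ w ∈ insert v B, x w := by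
    rw [← sum_union sdiff_disjoint]
    exact sum_le_sum_of_subset_of_nonneg (by grind) fun w _ _ => hx.nonneg w
  have : (0 : ℝ) ≤ k := k.cast_nonneg
  linarith [hG.le_sum_compl_neighborFinset hk hτ hsp hx hu, hτ.cast_le]

lemma one_sub_le_apply (v : Fin n) : 1 - 8 * τ ≤ x v := by
  have h₁ := hG.le_lam1_mul hk hτ hsp hx v
  have h₂ := mul_le_mul_of_nonneg_right (hx.lam1_le hτ.pos.le hsp) (hx.nonneg v)
  have h₃ : 0 ≤ 8 * τ ^ 2 * n := by positivity
  refine le_of_mul_le_mul_left (?_ : (1 / 2 + τ) * n * (1 - 8 * τ) ≤ _) ?_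
  · linarith
  · have := hτ.mul_cast_pos
    have := hτ.cast_pos
    linarith

lemma le_degree (v : Fin n) : (1 / 2 - 3 * τ) * n ≤ G.degree v := by
  refine (hG.le_lam1_mul hk hτ hsp hx v).trans ?_
  rw [← hx.sum_neighborFinset]
  exact hx.sum_le_card _

end IsSpexWheel

end NeighborhoodCut

section MaxCut

open Finset

section General

variable {V : Type*} {G : SimpleGraph V} [DecidableRel G.Adj] [DecidableEq V]

lemma card_interedges_erase_insert {S T : Finset V} {v : V} (hS : v ∈ S) (hT : v ∉ T) :
    #(G.interedges (S.erase v) (insert v T)) + #{w ∈ T | G.Adj v w} =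
      #(G.interedges S T) + #{w ∈ S | G.Adj v w} := by
  have : Std.Symm G.Adj := G.symm
  have hcomm (A B : Finset V) : #(G.interedges A B) = ∑ b ∈ B, #{a ∈ A | G.Adj b a} := by
    rw [SimpleGraph.interedges, Rel.card_interedges_comm, card_interedges_eq_sum]
  have hT' : #(G.interedges (S.erase v) (insert v T)) =
      #{w ∈ S | G.Adj v w} + #(G.interedges (S.erase v) T) := by
    rw [hcomm, sum_insert hT, ← hcomm, filter_erase, erase_eq_of_notMem (by simp)]
  have hS' : #{w ∈ T | G.Adj v w} + #(G.interedges (S.erase v) T) = #(G.interedges S T) := by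
    simp only [SimpleGraph.interedges, card_interedges_eq_sum]
    exact add_sum_erase S (fun a => #{w ∈ T | G.Adj a w}) hS
  omega

lemma IsDenseCut.card_filter_adj_le [Fintype V] {τ : ℝ} {S : Finset V} (h : IsDenseCut G τ S)
    (hτ : 0 ≤ τ) (hsp : HasSparseNeighborhoods G (τ ^ 2 / 2)) {v : V}
    (hle : #{w ∈ S | G.Adj v w} ≤ #{w ∈ Sᶜ | G.Adj v w}) :
    #{w ∈ S | G.Adj v w} ≤ 2 * τ * Fintype.card V := by
  set P : Finset V := {w ∈ S | G.Adj v w}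
  set Q : Finset V := {w ∈ Sᶜ | G.Adj v w}
  have hnbr (A : Finset V) : ({w ∈ A | G.Adj v w} : Finset V) ⊆ G.neighborFinset v := fun w hw =>
    (G.mem_neighborFinset v w).2 (mem_filter.1 hw).2
  have hinner : (#(G.interedges P Q) : ℝ) ≤ τ ^ 2 / 2 * Fintype.card V ^ 2 :=
    (Nat.cast_le.2 (card_le_card (Rel.interedges_mono (hnbr S) (hnbr Sᶜ)))).trans (hsp v)
  have hprod := h.card_mul_card_le (filter_subset _ S : P ⊆ S) (filter_subset _ Sᶜ : Q ⊆ Sᶜ)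
  refine le_of_sq_le_sq ?_ (by positivity)
  have hPQ : (#P : ℝ) * #P ≤ #P * #Q := by gcongr
  have : 0 ≤ τ ^ 2 * (Fintype.card V : ℝ) ^ 2 := by positivity
  linarith

end General

variable {k n : ℕ} {τ : ℝ} {G : SimpleGraph (Fin n)} [DecidableRel G.Adj] {S T : Finset (Fin n)}

lemma degIn_eq_card_filter (A : Finset (Fin n)) (v : Fin n) :
    degIn G A v = #{w ∈ A | G.Adj v w} := by
  unfold degIn
  congr!

lemma cutCount_eq_card_interedges (S : Finset (Fin n)) : cutCount G S = #(G.interedges S Sᶜ) := by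
  unfold cutCount
  refine congrArg card (Finset.ext fun p => ?_)
  simp only [mem_filter, mem_univ, true_and, SimpleGraph.mem_interedges_iff, mem_compl]
  tauto

namespace IsMaxCut

omit [DecidableRel G.Adj] in
lemma symm (h : IsMaxCut G S T) : IsMaxCut G T S := by
  classical
  have : Std.Symm G.Adj := G.symm
  have hcut : cutCount G Sᶜ = cutCount G S := by
    rw [cutCount_eq_card_interedges, cutCount_eq_card_interedges, compl_compl,
      SimpleGraph.interedges, Rel.card_interedges_comm, SimpleGraph.interedges]
  obtain ⟨rfl, hmax⟩ := h
  exact ⟨(compl_compl S).symm, fun S' => (hmax S').trans_eq hcut.symm⟩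

lemma card_interedges_le (h : IsMaxCut G S T) (A : Finset (Fin n)) :
    #(G.interedges A Aᶜ) ≤ #(G.interedges S Sᶜ) := by
  simpa only [cutCount_eq_card_interedges] using h.2 A

lemma isDenseCut (h : IsMaxCut G S T) {A : Finset (Fin n)} (hA : IsDenseCut G τ A) :
    IsDenseCut G τ S :=
  le_trans hA (Nat.cast_le.2 (h.card_interedges_le A))

lemma card_filter_adj_le (h : IsMaxCut G S T) {v : Fin n} (hv : v ∈ S) :
    #{w ∈ S | G.Adj v w} ≤ #{w ∈ Sᶜ | G.Adj v w} := by
  have hmove := h.card_interedges_le (S.erase v)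
  have := card_interedges_erase_insert (G := G) hv (notMem_compl.2 hv)
  rw [compl_erase] at hmove
  omega

end IsMaxCut

namespace IsSpexWheel

variable {x : Fin n → ℝ} {u : Fin n} (hG : IsSpexWheel (2 * k + 1) G) (hk : 0 < k)
  (hτ : IsTolerance k n τ) (hsp : HasSparseNeighborhoods G (τ ^ 2 / 2)) (hx : IsPerronVector G x)
  (hST : IsMaxCut G S T)
include hG hk hτ hsp hx hST

lemma isDenseCut_of_isMaxCut : IsDenseCut G τ S := by
  obtain ⟨u, hu⟩ := hx.exists_eq_one
  exact hST.isDenseCut (hG.isDenseCut_neighborFinset hk hτ hsp hx hu)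

lemma abs_card_sub_le_of_isMaxCut : |#S - (n : ℝ) / 2| ≤ τ * n := by
  simpa only [Fintype.card_fin] using
    (hG.isDenseCut_of_isMaxCut hk hτ hsp hx hST).abs_card_sub_le hτ.pos.le

lemma isNearlyJoined_of_isMaxCut : IsNearlyJoined G (6 * τ * n) S T := by
  intro v hv
  have hcut := hG.isDenseCut_of_isMaxCut hk hτ hsp hx hST
  have hin := hcut.card_filter_adj_le hτ.pos.le hsp (hST.card_filter_adj_le hv)
  have hT := abs_le.1 (hG.abs_card_sub_le_of_isMaxCut hk hτ hsp hx hST.symm)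
  have hdeg := hG.le_degree hk hτ hsp hx v
  have hsplit : (#{w ∈ S | G.Adj v w} + #{w ∈ T | G.Adj v w} : ℝ) = G.degree v := by
    rw [hST.1, ← SimpleGraph.card_neighborFinset_eq_degree]
    simp only [card_eq_sum_ones, Nat.cast_sum]
    exact (sum_neighborFinset_eq_sum_filter_add G S v _).symm
  have hT' : (#{w ∈ T | G.Adj v w} + #{w ∈ T | ¬ G.Adj v w} : ℝ) = #T := by
    exact_mod_cast card_filter_add_card_filter_not (s := T) fun w => G.Adj v w
  rw [Fintype.card_fin] at hin
  linarith

lemma card_filter_adj_lt (hu : u ∈ S) : #{w ∈ S | G.Adj u w} < k := by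
  by_contra! hle
  obtain ⟨P, hPS, hPk⟩ := exists_subset_card_eq hle
  have hP (p) (hp : p ∈ P) : p ∈ S ∧ G.Adj u p := mem_filter.1 (hPS hp)
  have hjoin := hG.isNearlyJoined_of_isMaxCut hk hτ hsp hx hST
  have hT := abs_le.1 (hG.abs_card_sub_le_of_isMaxCut hk hτ hsp hx hST.symm)
  obtain ⟨Q, -, hQ, hadj⟩ := hjoin.exists_subset_forall_adj (C := insert u P)
    (insert_subset hu fun p hp => (hP p hp).1)
  have hcard : (#(insert u P) : ℝ) ≤ k + 1 := by exact_mod_cast hPk ▸ card_insert_le u P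
  have hloss : #(insert u P) * (6 * τ * n) ≤ (k + 1) * (6 * τ * n) := by
    have := hτ.mul_cast_pos
    gcongr
    linarith
  have hQk : k ≤ #Q := by
    rw [← Nat.cast_le (α := ℝ)]
    linarith [hτ.cast_le, hτ.mul_cast_le, hτ.cast_pos, hτ.mul_mul_cast_le]
  exact hG.1 (containsCopy_wheelGraph_of_biclique hPk.ge hQk (fun p hp => (hP p hp).2)
    (fun q hq => (hadj q hq u (mem_insert_self u P)).symm)
    fun p hp q hq => (hadj q hq p (mem_insert_of_mem hp)).symm)

lemma sum_le_sum_neighborFinset (hu : u ∈ S) : ∑ w ∈ T, x w ≤ ∑ w ∈ G.neighborFinset u, x w := by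
  rw [hx.sum_neighborFinset]
  have hjoin := hG.isNearlyJoined_of_isMaxCut hk hτ hsp hx hST.symm
  have hS := abs_le.1 (hG.abs_card_sub_le_of_isMaxCut hk hτ hsp hx hST)
  refine hG.sum_le hx (hG.lam1_pos hk hτ) hjoin ?_ ?_ ?_
  · linarith [hτ.mul_cast_pos]
  · push_cast
    linarith [hτ.cast_le, hτ.mul_cast_le, hτ.cast_pos, hτ.mul_mul_cast_le]
  · rw [hST.1]
    exact notMem_compl.2 hu

lemma card_filter_not_adj_le (hu : u ∈ S) : #{w ∈ T | ¬ G.Adj u w} ≤ #{w ∈ S | G.Adj u w} := by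
  have hsum : ∑ w ∈ T with ¬ G.Adj u w, x w ≤ ∑ w ∈ S with G.Adj u w, x w := by
    have hsplit := sum_filter_add_sum_filter_not T (fun w => G.Adj u w) x
    have hnbr := sum_neighborFinset_eq_sum_filter_add G S u x
    rw [← hST.1] at hnbr
    linarith [hG.sum_le_sum_neighborFinset hk hτ hsp hx hST hu]
  have hlow : (1 - 8 * τ) * #{w ∈ T | ¬ G.Adj u w} ≤ #{w ∈ S | G.Adj u w} := by
    rw [mul_comm, ← nsmul_eq_mul]
    exact (card_nsmul_le_sum _ _ _ fun w _ => hG.one_sub_le_apply hk hτ hsp hx w).trans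
      (hsum.trans (hx.sum_le_card _))
  have hinner : (#{w ∈ S | G.Adj u w} + 1 : ℝ) ≤ k := by
    exact_mod_cast hG.card_filter_adj_lt hk hτ hsp hx hST hu
  by_contra! hlt
  have hlt' : (#{w ∈ S | G.Adj u w} + 1 : ℝ) ≤ #{w ∈ T | ¬ G.Adj u w} := by exact_mod_cast hlt
  have hmul : (1 - 8 * τ) * (#{w ∈ S | G.Adj u w} + 1) ≤ #{w ∈ S | G.Adj u w} := by
    refine (mul_le_mul_of_nonneg_left hlt' ?_).trans hlow
    linarith [hτ.le]
  linarith [mul_le_mul_of_nonneg_left hinner hτ.pos.le, hτ.mul_le, hτ.pos]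

lemma card_sub_degIn_le (hu : u ∈ S) : #T - degIn G S u ≤ degIn G T u := by
  have hle := hG.card_filter_not_adj_le hk hτ hsp hx hST hu
  have := card_filter_add_card_filter_not (s := T) fun w => G.Adj u w
  rw [degIn_eq_card_filter, degIn_eq_card_filter]
  omega

end IsSpexWheel

end MaxCut

theorem cross_degrees_large_general (k : ℕ) (hk : 0 < k) :
    ∃ N : ℕ, ∀ n : ℕ, N ≤ n → ∀ G : SimpleGraph (Fin n), IsSpexWheel (2 * k + 1) G →
      ∀ S T : Finset (Fin n), IsMaxCut G S T →
        (∀ u ∈ S, T.card - degIn G S u ≤ degIn G T u) ∧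
        (∀ u ∈ T, S.card - degIn G T u ≤ degIn G S u) := by
  classical
  obtain ⟨τ, hτ, N₁, hN₁⟩ := exists_isTolerance k
  obtain ⟨N₂, hN₂⟩ := exists_forall_hasSparseNeighborhoods k (ε := τ ^ 2 / 2) (by positivity)
  refine ⟨max N₁ N₂, fun n hn G hG S T hST => ?_⟩
  have htol := hN₁ n (le_of_max_le_left hn)
  have hsp := hN₂ n (le_of_max_le_right hn) G hG.1
  obtain ⟨x, hx⟩ := exists_isPerronVector (G := G) htol.card_pos
  exact ⟨fun u hu => hG.card_sub_degIn_le hk htol hsp hx hST hu,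
    fun u hu => hG.card_sub_degIn_le hk htol hsp hx hST.symm hu⟩

/-- Every vertex of one side of a maximum cut with internal degree `d`
is adjacent to all but at most `d` vertices of the other side. -/
theorem cross_degrees_large (k : ℕ) (hk : 3 ≤ k) :
    ∃ N : ℕ, ∀ n : ℕ, N ≤ n → ∀ G : SimpleGraph (Fin n), IsSpexWheel (2 * k + 1) G →
      ∀ S T : Finset (Fin n), IsMaxCut G S T →
        (∀ u ∈ S, T.card - degIn G S u ≤ degIn G T u) ∧
        (∀ u ∈ T, S.card - degIn G T u ≤ degIn G S u) :=
  cross_degrees_large_general k (by omega)
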